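/- Let s ∈ (0,1) and let φ ∈ C¹_c(ℝⁿ) be nonnegative with compact support of diameter d_φ. Then for all 1 ≤ p ≤ ∞ and u ∈ L^p_{uloc}(ℝⁿ), the commutator satisfies the global bound ‖[φ, Λˢ]u‖_{L^p(ℝⁿ)} ≤ C_{s,d_φ} (M_φ + 1) ‖u‖_{L^p_{uloc}(ℝⁿ)}, where M_φ = ‖φ‖_∞^{1-s} ‖∇φ‖_∞^{s}. -/

import Mathlib

open MeasureTheory Metric
open scoped ENNReal

lemma aux_young {E : Type*} [NormedAddCommGroup E] [NormedSpace ℝ E] [FiniteDimensional ℝ E]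
    [MeasureSpace E] [BorelSpace E] [(volume : Measure E).IsAddHaarMeasure]
    (k f : E → ℝ≥0∞) (hk : Measurable k) (hf : Measurable f) (p : ℝ≥0∞) (hp : 1 ≤ p) :
    eLpNorm (fun x => ∫⁻ y, k (x - y) * f y) p volume ≤ (∫⁻ z, k z) * eLpNorm f p volume := by
  by_cases hpt : p = ∞
  · subst hpt
    rw [eLpNorm_exponent_top, eLpNorm_exponent_top]
    refine essSup_le_of_ae_le _ ?_
    refine Filter.Eventually.of_forall fun x => ?_
    simp only [enorm_eq_self]
    calc ∫⁻ y, k (x - y) * f y ≤ ∫⁻ y, k (x - y) * eLpNormEssSup f volume := by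
          apply lintegral_mono_ae
          filter_upwards [enorm_ae_le_eLpNormEssSup f volume] with y hy
          gcongr
          simpa using hy
      _ = _ := by
          rw [lintegral_mul_const _ (by fun_prop), lintegral_sub_left_eq_self k x]
  · have hp0 : p ≠ 0 := (zero_lt_one.trans_le hp).ne'
    have hr : 1 ≤ p.toReal := by
      have := (ENNReal.toReal_le_toReal (by simp) hpt).2 hp
      simpa using this
    have hr0 : 0 < p.toReal := by linarith
    rw [eLpNorm_eq_lintegral_rpow_enorm_toReal hp0 hpt, eLpNorm_eq_lintegral_rpow_enorm_toReal hp0 hpt]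
    simp only [enorm_eq_self]
    set r := p.toReal with hrdef
    set K := ∫⁻ z, k z with hK
    have key : ∀ x, (∫⁻ y, k (x - y) * f y) ^ r ≤ K ^ (r - 1) * ∫⁻ y, k (x - y) * f y ^ r := by
      intro x
      have hkx : Measurable fun y => k (x - y) := by fun_prop
      let ν : Measure E := volume.withDensity (fun y => k (x - y))
      have h1 := eLpNorm_le_eLpNorm_mul_rpow_measure_univ (μ := ν) hp hf.aestronglyMeasurable
      have hu : ν Set.univ = K := by
        simp only [ν, withDensity_apply _ MeasurableSet.univ, Measure.restrict_univ]
        exact lintegral_sub_left_eq_self k x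
      rw [eLpNorm_one_eq_lintegral_enorm, eLpNorm_eq_lintegral_rpow_enorm_toReal hp0 hpt, hu] at h1
      simp only [enorm_eq_self] at h1
      rw [lintegral_withDensity_eq_lintegral_mul _ hkx hf,
        lintegral_withDensity_eq_lintegral_mul _ hkx (by fun_prop)] at h1
      simp only [Pi.mul_apply, ENNReal.toReal_one] at h1
      have h2 := ENNReal.rpow_le_rpow h1 hr0.le
      refine h2.trans (le_of_eq ?_)
      rw [ENNReal.mul_rpow_of_nonneg _ _ hr0.le, ← ENNReal.rpow_mul, ← ENNReal.rpow_mul, ← hrdef]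
      have e1 : 1 / r * r = 1 := by field_simp
      have e2 : (1 / 1 - 1 / r) * r = r - 1 := by field_simp
      rw [e1, e2, ENNReal.rpow_one, mul_comm]
    have h3 : ∫⁻ x, (∫⁻ y, k (x - y) * f y) ^ r ≤ K ^ r * ∫⁻ y, f y ^ r := by
      have hm : Measurable (fun q : E × E => k (q.1 - q.2) * f q.2 ^ r) := by fun_prop
      calc ∫⁻ x, (∫⁻ y, k (x - y) * f y) ^ r
          ≤ ∫⁻ x, K ^ (r - 1) * ∫⁻ y, k (x - y) * f y ^ r := lintegral_mono key
        _ = K ^ (r - 1) * ∫⁻ x, ∫⁻ y, k (x - y) * f y ^ r := by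
            rw [lintegral_const_mul]
            exact hm.lintegral_prod_right'
        _ = K ^ (r - 1) * ∫⁻ y, ∫⁻ x, k (x - y) * f y ^ r := by
            rw [lintegral_lintegral_swap hm.aemeasurable]
        _ = K ^ (r - 1) * ∫⁻ y, K * f y ^ r := by
            congr 1
            apply lintegral_congr
            intro y
            rw [lintegral_mul_const _ (by fun_prop), lintegral_sub_right_eq_self k y]
        _ = K ^ (r - 1) * K * ∫⁻ y, f y ^ r := by
            rw [lintegral_const_mul _ (by fun_prop), mul_assoc]
        _ = _ := by
            congr 1
            conv_lhs => rw [← ENNReal.rpow_one K, ← ENNReal.rpow_mul, ]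
            rw [← ENNReal.rpow_add_of_nonneg _ _ (by linarith) (by norm_num)]
            congr 1; ring
    have h4 := ENNReal.rpow_le_rpow h3 (z := 1 / r) (by positivity)
    refine h4.trans (le_of_eq ?_)
    rw [ENNReal.mul_rpow_of_nonneg _ _ (by positivity), ← ENNReal.rpow_mul]
    have e1 : r * (1 / r) = 1 := by field_simp
    rw [e1, ENNReal.rpow_one]

lemma aux_int (n : ℕ) (hn : 0 < n) (s : ℝ) (hs : s ∈ Set.Ioo (0 : ℝ) 1) :
    Integrable (fun z : EuclideanSpace ℝ (Fin n) => min ‖z‖ 1 / ‖z‖ ^ ((n : ℝ) + s)) volume := by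
  have : Nonempty (Fin n) := ⟨⟨0, hn⟩⟩
  rw [integrable_fun_norm_addHaar (volume : Measure (EuclideanSpace ℝ (Fin n)))
    (f := fun r : ℝ => min r 1 / r ^ ((n : ℝ) + s))]
  simp only [finrank_euclideanSpace, Fintype.card_fin, smul_eq_mul]
  have hy0 : ∀ y : ℝ, 0 < y → y ^ (n - 1) / y ^ ((n : ℝ) + s) = y ^ (-1 - s) := by
    intro y hy
    rw [← Real.rpow_natCast, ← Real.rpow_sub hy]
    congr 1
    rw [Nat.cast_sub (by omega)]; push_cast; ring
  have : Set.Ioi (0 : ℝ) = Set.Ioc 0 1 ∪ Set.Ioi 1 := by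
    rw [Set.Ioc_union_Ioi_eq_Ioi]; norm_num
  rw [this]
  apply IntegrableOn.union
  · have h := (intervalIntegral.intervalIntegrable_rpow' (a := 0) (b := 1) (r := -s)
      (by linarith [hs.2])).1
    refine h.congr_fun (fun y hy => ?_) measurableSet_Ioc
    have : (fun x : ℝ => x ^ (-s)) y = y ^ (-1 - s) * y := by
      simp only
      nth_rewrite 3 [← Real.rpow_one y]
      rw [← Real.rpow_add hy.1]; congr 1; ring
    rw [this, ← hy0 y hy.1, min_eq_left hy.2]; ring
  · have h := integrableOn_Ioi_rpow_of_lt (a := -1 - s) (by linarith [hs.1]) (c := 1) one_pos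
    refine h.congr_fun (fun y hy => ?_) measurableSet_Ioi
    have hy' : (1 : ℝ) < y := hy
    simp only
    rw [← hy0 y (by linarith), min_eq_right hy'.le]; ring

lemma aux_kernel (n : ℕ) (s : ℝ) (A B : ℝ) (hA : 0 < A) (hB : 0 < B)
    (hI : Integrable (fun z : EuclideanSpace ℝ (Fin n) => min ‖z‖ 1 / ‖z‖ ^ ((n : ℝ) + s)) volume) :
    ∫⁻ z : EuclideanSpace ℝ (Fin n), ENNReal.ofReal (min (A * ‖z‖) B / ‖z‖ ^ ((n : ℝ) + s)) =
      ENNReal.ofReal (B ^ (1 - s) * A ^ s) *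
        ENNReal.ofReal (∫ z : EuclideanSpace ℝ (Fin n), min ‖z‖ 1 / ‖z‖ ^ ((n : ℝ) + s)) := by
  set F : EuclideanSpace ℝ (Fin n) → ℝ := fun z => min ‖z‖ 1 / ‖z‖ ^ ((n : ℝ) + s) with hF
  have hR : 0 < A / B := by positivity
  have e : (fun z : EuclideanSpace ℝ (Fin n) => min (A * ‖z‖) B / ‖z‖ ^ ((n : ℝ) + s)) =
      fun z => (B * (A / B) ^ ((n : ℝ) + s)) * F ((A / B) • z) := by
    ext z
    simp only [hF, norm_smul, Real.norm_of_nonneg hR.le]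
    rw [Real.mul_rpow hR.le (norm_nonneg z)]
    have h1 : min (A * ‖z‖) B = B * min (A / B * ‖z‖) 1 := by
      rw [mul_min_of_nonneg _ _ hB.le]; congr 1
      · field_simp
      · ring
    have h2 : (A / B) ^ ((n : ℝ) + s) ≠ 0 := by positivity
    rw [h1]
    field_simp
  have hI2 : Integrable (fun z => (B * (A / B) ^ ((n : ℝ) + s)) * F ((A / B) • z)) volume :=
    ((integrable_comp_smul_iff volume F hR.ne').2 hI).const_mul _
  rw [← e] at hI2
  rw [← ofReal_integral_eq_lintegral_ofReal hI2 (Filter.Eventually.of_forall fun z => by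
    simp only [Pi.zero_apply]; positivity), ← ENNReal.ofReal_mul (by positivity), e, integral_const_mul,
    Measure.integral_comp_smul]
  congr 1
  rw [smul_eq_mul, ← mul_assoc]
  congr 1
  simp only [finrank_euclideanSpace, Fintype.card_fin]
  rw [abs_of_nonneg (by positivity), Real.rpow_add hR, Real.rpow_natCast, Real.div_rpow hA.le hB.le,
    Real.rpow_sub hB, Real.rpow_one]
  field_simp

lemma aux_cover (n : ℕ) (R : ℝ) : ∃ N : ℕ, ∀ (x₀ : EuclideanSpace ℝ (Fin n)) (p : ℝ≥0∞), 1 ≤ p →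
    ∀ u : EuclideanSpace ℝ (Fin n) → ℝ, Measurable u →
    eLpNorm ((closedBall x₀ R).indicator (fun y => ‖u y‖ₑ)) p volume ≤
      N * ⨆ x₀ : EuclideanSpace ℝ (Fin n), eLpNorm u p (volume.restrict (ball x₀ 1)) := by
  obtain ⟨t, -, htf, ht⟩ := (isCompact_closedBall (0 : EuclideanSpace ℝ (Fin n)) R).finite_cover_balls
    (e := 1) one_pos
  lift t to Finset (EuclideanSpace ℝ (Fin n)) using htf
  refine ⟨t.card, fun x₀ p hp u hu => ?_⟩
  set S := ⨆ x₀ : EuclideanSpace ℝ (Fin n), eLpNorm u p (volume.restrict (ball x₀ 1))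
  have hm : Measurable fun y => ‖u y‖ₑ := hu.enorm
  calc _ ≤ eLpNorm (∑ i ∈ t, (ball (x₀ + i) 1).indicator (fun y => ‖u y‖ₑ)) p volume := by
        apply eLpNorm_mono_enorm
        intro y
        simp only [enorm_eq_self]
        by_cases hy : y ∈ closedBall x₀ R
        · rw [Set.indicator_of_mem hy]
          have : y - x₀ ∈ closedBall (0 : EuclideanSpace ℝ (Fin n)) R := by
            simpa [dist_eq_norm] using hy
          have := ht this
          simp only [Set.mem_iUnion] at this
          obtain ⟨i, hi, hyi⟩ := this
          rw [Finset.sum_apply]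
          have h1 : y ∈ ball (x₀ + i) 1 := by
            rw [mem_ball, dist_eq_norm] at hyi ⊢
            rwa [← sub_sub]
          refine le_trans ?_ (Finset.single_le_sum (f := fun i => (ball (x₀ + i) 1).indicator (fun y => ‖u y‖ₑ) y) (fun _ _ => zero_le) hi)
          rw [Set.indicator_of_mem h1]
        · rw [Set.indicator_of_notMem hy]; exact zero_le
    _ ≤ ∑ i ∈ t, eLpNorm ((ball (x₀ + i) 1).indicator (fun y => ‖u y‖ₑ)) p volume :=
        eLpNorm_sum_le (fun i _ => (hm.indicator measurableSet_ball).aestronglyMeasurable) hp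
    _ ≤ ∑ i ∈ t, S := by
        apply Finset.sum_le_sum
        intro i _
        rw [eLpNorm_indicator_eq_eLpNorm_restrict measurableSet_ball, eLpNorm_enorm]
        exact le_iSup (fun x₀ : EuclideanSpace ℝ (Fin n) => eLpNorm u p (volume.restrict (ball x₀ 1))) _
    _ = _ := by simp

lemma aux_rpow_le_max (a : ℝ≥0∞) (r : ℝ) (h0 : 0 ≤ r) (h1 : r ≤ 1) : a ^ r ≤ max 1 a := by
  rcases le_total a 1 with h | h
  · exact (ENNReal.rpow_le_one h h0).trans (le_max_left _ _)
  · calc a ^ r ≤ a ^ (1 : ℝ) := ENNReal.rpow_le_rpow_of_exponent_le h h1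
      _ ≤ _ := by simp

lemma aux_far (n : ℕ) (s : ℝ) (hs : 0 < s) : ∃ C : ℝ≥0∞, C ≠ ∞ ∧
    ∀ (x : EuclideanSpace ℝ (Fin n)) (p : ℝ≥0∞), 1 ≤ p →
    ∀ u : EuclideanSpace ℝ (Fin n) → ℝ, Measurable u →
    ∫⁻ y, ENNReal.ofReal ((1 + ‖x - y‖) ^ (-((n : ℝ) + s))) * ‖u y‖ₑ ≤
      C * ⨆ x₀ : EuclideanSpace ℝ (Fin n), eLpNorm u p (volume.restrict (ball x₀ 1)) := by
  set w : EuclideanSpace ℝ (Fin n) → ℝ≥0∞ := fun z => ENNReal.ofReal ((1 + ‖z‖) ^ (-((n : ℝ) + s))) with hw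
  have hwm : Measurable w := by fun_prop
  have hwi : ∫⁻ z, w z ≠ ∞ := by
    have := finite_integral_one_add_norm (E := EuclideanSpace ℝ (Fin n)) (μ := volume) (r := (n : ℝ) + s)
      (by simp [hs])
    exact this.ne
  set V : ℝ≥0∞ := volume (ball (0 : EuclideanSpace ℝ (Fin n)) 1) with hV
  have hV0 : V ≠ 0 := (measure_ball_pos _ _ one_pos).ne'
  have hVt : V ≠ ∞ := measure_ball_lt_top.ne
  have hVx : ∀ x : EuclideanSpace ℝ (Fin n), volume (ball x 1) = V := fun x => by
    rw [hV, Measure.addHaar_ball_center]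
  set c : ℝ≥0∞ := ENNReal.ofReal (2 ^ ((n : ℝ) + s))
  have hww : ∀ a b : EuclideanSpace ℝ (Fin n), ‖a - b‖ < 1 → w a ≤ c * w b := by
    intro a b hab
    simp only [hw, c]
    rw [← ENNReal.ofReal_mul (by positivity)]
    apply ENNReal.ofReal_le_ofReal
    have h1 : 1 + ‖b‖ ≤ 2 * (1 + ‖a‖) := by
      have : ‖b‖ ≤ ‖a‖ + ‖a - b‖ := by
        have := norm_sub_le a (a - b); simpa using this
      linarith [norm_nonneg a]
    have h2 : ((2 : ℝ) * (1 + ‖a‖)) ^ (-((n : ℝ) + s)) ≤ (1 + ‖b‖) ^ (-((n : ℝ) + s)) :=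
      Real.rpow_le_rpow_of_nonpos (by positivity) h1 (by have : (0:ℝ) ≤ n := by positivity
                                                         linarith)
    rw [Real.mul_rpow (by norm_num) (by positivity)] at h2
    calc (1 + ‖a‖) ^ (-((n : ℝ) + s)) = 2 ^ ((n : ℝ) + s) * (2 ^ (-((n : ℝ) + s)) * (1 + ‖a‖) ^ (-((n : ℝ) + s))) := by
          rw [← mul_assoc, ← Real.rpow_add (by norm_num)]; simp
      _ ≤ _ := by gcongr
  refine ⟨V⁻¹ * (c * (max 1 V * ∫⁻ z, w z)), ?_, ?_⟩
  · have : max 1 V ≠ ∞ := by simp [hVt]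
    have : V⁻¹ ≠ ∞ := by simp [hV0]
    have : c ≠ ∞ := ENNReal.ofReal_ne_top
    finiteness
  intro x p hp u hu
  have hum : Measurable fun y => ‖u y‖ₑ := hu.enorm
  set S := ⨆ x₀ : EuclideanSpace ℝ (Fin n), eLpNorm u p (volume.restrict (ball x₀ 1)) with hS
  have hloc : ∀ z, ∫⁻ y in ball z 1, ‖u y‖ₑ ≤ max 1 V * S := by
    intro z
    have h1 := eLpNorm_le_eLpNorm_mul_rpow_measure_univ (μ := volume.restrict (ball z 1)) hp hu.aestronglyMeasurable
    rw [eLpNorm_one_eq_lintegral_enorm, Measure.restrict_apply_univ, hVx] at h1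
    refine h1.trans ?_
    rw [mul_comm]
    gcongr
    · apply aux_rpow_le_max
      · simp only [ENNReal.toReal_one]
        by_cases hpt : p = ∞
        · simp [hpt]
        · have : 1 ≤ p.toReal := by simpa using (ENNReal.toReal_le_toReal (by simp) hpt).2 hp
          have : 1 / p.toReal ≤ 1 := by rw [div_le_one (by linarith)]; exact this
          linarith
      · have : 0 ≤ 1 / p.toReal := by positivity
        simp only [ENNReal.toReal_one]; linarith
    · exact le_iSup (fun x₀ : EuclideanSpace ℝ (Fin n) => eLpNorm u p (volume.restrict (ball x₀ 1))) z
  let P : EuclideanSpace ℝ (Fin n) × EuclideanSpace ℝ (Fin n) → ℝ≥0∞ :=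
      {q : EuclideanSpace ℝ (Fin n) × EuclideanSpace ℝ (Fin n) | dist q.1 q.2 < 1}.indicator
        (fun q => w (x - q.1) * ‖u q.1‖ₑ)
  have hind : Measurable P := by
    apply Measurable.indicator
    · fun_prop
    · exact (isOpen_lt (by fun_prop) (by fun_prop)).measurableSet
  have hmain : V * ∫⁻ y, w (x - y) * ‖u y‖ₑ ≤ c * (max 1 V * ∫⁻ z, w z) * S := by
    calc V * ∫⁻ y, w (x - y) * ‖u y‖ₑ = ∫⁻ y, ∫⁻ z, P (y, z) := by
          rw [← lintegral_const_mul _ (by fun_prop)]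
          apply lintegral_congr
          intro y
          have : (fun z => P (y, z)) = (ball y 1).indicator (fun _ => w (x - y) * ‖u y‖ₑ) := by
            ext z
            simp [P, Set.indicator, dist_comm y z]
          rw [this, lintegral_indicator_const measurableSet_ball, hVx, mul_comm]
      _ = ∫⁻ z, ∫⁻ y, P (y, z) := lintegral_lintegral_swap hind.aemeasurable
      _ ≤ ∫⁻ z, c * w (x - z) * (max 1 V * S) := by
          apply lintegral_mono
          intro z
          calc _ ≤ ∫⁻ y, (ball z 1).indicator (fun y => c * w (x - z) * ‖u y‖ₑ) y := by
                apply lintegral_mono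
                intro y
                simp only [P, Set.indicator, Set.mem_ofPred_eq, mem_ball]
                split_ifs with h
                · gcongr
                  apply hww
                  rw [dist_eq_norm, norm_sub_rev] at h
                  simpa using h
                · exact le_rfl
            _ = c * w (x - z) * ∫⁻ y in ball z 1, ‖u y‖ₑ := by
                rw [lintegral_indicator measurableSet_ball, lintegral_const_mul _ hum]
            _ ≤ _ := mul_le_mul' le_rfl (hloc z)
      _ = _ := by
          rw [lintegral_mul_const _ (by fun_prop), lintegral_const_mul _ (by fun_prop), lintegral_sub_left_eq_self w x]
          ring
  calc ∫⁻ y, w (x - y) * ‖u y‖ₑ = V⁻¹ * (V * ∫⁻ y, w (x - y) * ‖u y‖ₑ) := by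
        rw [← mul_assoc, ENNReal.inv_mul_cancel hV0 hVt, one_mul]
    _ ≤ V⁻¹ * (c * (max 1 V * ∫⁻ z, w z) * S) := by gcongr
    _ = _ := by ring

lemma aux_meas (n : ℕ) (hn : 0 < n) (s : ℝ) (hs : s ∈ Set.Ioo (0 : ℝ) 1)
    (Cs : ℝ) (d : ℝ) (hd : 0 < d) :
    ∃ C : ℝ≥0∞, C ≠ ∞ ∧ ∀ φ : EuclideanSpace ℝ (Fin n) → ℝ,
      ContDiff ℝ 1 φ → (∀ x, 0 ≤ φ x) → HasCompactSupport φ →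
      Metric.diam (tsupport φ) ≤ d →
      ∀ A B : ℝ, (∀ x, ‖fderiv ℝ φ x‖ ≤ A) → (∀ x, |φ x| ≤ B) →
      ∀ (p : ℝ≥0∞), 1 ≤ p → ∀ u : EuclideanSpace ℝ (Fin n) → ℝ, Measurable u →
        eLpNorm (fun x => Cs * ∫ y, (φ x - φ y) * u y / ‖x - y‖ ^ ((n : ℝ) + s)) p volume ≤
          C * ENNReal.ofReal (B ^ (1 - s) * A ^ s) *
            ⨆ x₀ : EuclideanSpace ℝ (Fin n), eLpNorm u p (volume.restrict (ball x₀ 1)) := by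
  have hI := aux_int n hn s hs
  obtain ⟨N, hN⟩ := aux_cover n (d + 1)
  obtain ⟨C2, hC2, hfar⟩ := aux_far n s hs.1
  set I : ℝ := ∫ z : EuclideanSpace ℝ (Fin n), min ‖z‖ 1 / ‖z‖ ^ ((n : ℝ) + s) with hIdef
  set VD : ℝ≥0∞ := volume (closedBall (0 : EuclideanSpace ℝ (Fin n)) d) with hVD
  have hVDt : VD ≠ ∞ := measure_closedBall_lt_top.ne
  refine ⟨‖Cs‖ₑ * (ENNReal.ofReal I * N + ENNReal.ofReal ((2 * d) ^ s * 2 ^ ((n : ℝ) + s)) * C2 * max 1 VD),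
    ?_, ?_⟩
  · have : max 1 VD ≠ ∞ := by simp [hVDt]
    finiteness
  intro φ hφ hφ0 hφc hφd A B hA hB p hp u hu
  by_cases hz : ∀ x, φ x = 0
  · simp [hz]
  push Not at hz
  obtain ⟨x₀, hx₀⟩ := hz
  have hlip : ∀ x y, |φ x - φ y| ≤ A * ‖x - y‖ := fun x y =>
    Convex.norm_image_sub_le_of_norm_fderiv_le (𝕜 := ℝ) (s := Set.univ)
      (fun z _ => (hφ.differentiable (by norm_num)) z) (fun z _ => hA z) convex_univ
      (Set.mem_univ y) (Set.mem_univ x)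
  have hsupp : ∀ x y, φ x ≠ 0 → φ y ≠ 0 → dist x y ≤ d := fun x y hx hy =>
    (dist_le_diam_of_mem hφc.isCompact.isBounded (subset_tsupport _ hx) (subset_tsupport _ hy)).trans hφd
  have : Nonempty (Fin n) := ⟨⟨0, hn⟩⟩
  obtain ⟨e, he⟩ := exists_norm_eq (EuclideanSpace ℝ (Fin n)) (c := 2 * d) (by positivity)
  have hAd : ∀ x, φ x ≤ A * (2 * d) := by
    intro x
    by_cases hx : φ x = 0
    · rw [hx]
      have : 0 ≤ A := (norm_nonneg _).trans (hA x)
      positivity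
    · have h0 : φ (x + e) = 0 := by
        by_contra h
        have := hsupp _ _ h hx
        simp [he] at this
        linarith
      have := hlip x (x + e)
      rw [h0] at this
      simp only [sub_zero, sub_add_cancel_left, norm_neg, he] at this
      exact (le_abs_self _).trans this
  have hpos : 0 < φ x₀ := lt_of_le_of_ne (hφ0 x₀) hx₀.symm
  have hBle : ∀ x, φ x ≤ B := fun x => (le_abs_self _).trans (hB x)
  have hBpos : 0 < B := hpos.trans_le (hBle x₀)
  have hApos : 0 < A := by
    have := hpos.trans_le (hAd x₀)
    by_contra h
    push Not at h
    nlinarith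
  set M := B ^ (1 - s) * A ^ s with hM
  have hM0 : 0 < M := by positivity
  have hφM : ∀ x, φ x ≤ M * (2 * d) ^ s := by
    intro x
    calc φ x = φ x ^ (1 - s) * φ x ^ s := by
          rw [← Real.rpow_add_of_nonneg (hφ0 x) (by linarith [hs.2]) hs.1.le]; simp
      _ ≤ B ^ (1 - s) * (A * (2 * d)) ^ s := by
          have h1 : φ x ^ (1 - s) ≤ B ^ (1 - s) :=
            Real.rpow_le_rpow (hφ0 x) (hBle x) (by linarith [hs.2])
          have h2 : φ x ^ s ≤ (A * (2 * d)) ^ s := Real.rpow_le_rpow (hφ0 x) (hAd x) hs.1.le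
          have h3 : 0 ≤ φ x ^ s := Real.rpow_nonneg (hφ0 x) _
          exact mul_le_mul h1 h2 h3 (by positivity)
      _ = _ := by rw [Real.mul_rpow hApos.le (by positivity), hM, mul_assoc]
  have hdiffB : ∀ x y, |φ x - φ y| ≤ B := by
    intro x y
    rw [abs_le]
    constructor <;> linarith [hφ0 x, hφ0 y, hBle x, hBle y]
  set S := ⨆ x₀ : EuclideanSpace ℝ (Fin n), eLpNorm u p (volume.restrict (ball x₀ 1)) with hS
  have hum : Measurable fun y => ‖u y‖ₑ := hu.enorm
  set k : EuclideanSpace ℝ (Fin n) → ℝ≥0∞ :=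
    fun z => ENNReal.ofReal (min (A * ‖z‖) B / ‖z‖ ^ ((n : ℝ) + s)) with hk
  have hkm : Measurable k := by fun_prop
  set f : EuclideanSpace ℝ (Fin n) → ℝ≥0∞ :=
    (closedBall x₀ (d + 1)).indicator (fun y => ‖u y‖ₑ) with hf
  have hfm : Measurable f := hum.indicator measurableSet_closedBall
  set b : ℝ≥0∞ := ENNReal.ofReal (M * (2 * d) ^ s * 2 ^ ((n : ℝ) + s)) with hb
  set w : EuclideanSpace ℝ (Fin n) → ℝ≥0∞ := fun z => ENNReal.ofReal ((1 + ‖z‖) ^ (-((n : ℝ) + s))) with hw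
  have hns : 0 < (n : ℝ) + s := by have := hs.1; positivity
  have hpt : ∀ x y, ‖(φ x - φ y) * u y / ‖x - y‖ ^ ((n : ℝ) + s)‖ₑ ≤
      k (x - y) * f y + (closedBall x₀ d).indicator (fun _ => b) x * (w (x - y) * ‖u y‖ₑ) := by
    intro x y
    have e1 : ‖(φ x - φ y) * u y / ‖x - y‖ ^ ((n : ℝ) + s)‖ₑ =
        ENNReal.ofReal (|φ x - φ y| / ‖x - y‖ ^ ((n : ℝ) + s)) * ‖u y‖ₑ := by
      rw [mul_div_right_comm, enorm_mul, Real.enorm_eq_ofReal_abs, abs_div,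
        abs_of_nonneg (a := ‖x - y‖ ^ ((n : ℝ) + s)) (by positivity)]
    rw [e1]
    by_cases hy : y ∈ closedBall x₀ (d + 1)
    · refine le_trans ?_ le_self_add
      rw [hf, Set.indicator_of_mem hy]
      gcongr
      simp only [hk]
      apply ENNReal.ofReal_le_ofReal
      gcongr
      exact le_min (hlip x y) (hdiffB x y)
    · refine le_trans ?_ le_add_self
      have hdy : d + 1 < dist y x₀ := by simpa using hy
      have hy0 : φ y = 0 := by
        by_contra h
        linarith [hsupp y x₀ h hx₀]
      by_cases hx : x ∈ closedBall x₀ d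
      · rw [Set.indicator_of_mem hx, ← mul_assoc]
        gcongr
        rw [hb, hw, ← ENNReal.ofReal_mul (by positivity)]
        apply ENNReal.ofReal_le_ofReal
        have hdx : dist x x₀ ≤ d := by simpa using hx
        have h1 : 1 ≤ ‖x - y‖ := by
          have := dist_triangle_left y x₀ x
          rw [dist_eq_norm x y] at this
          linarith
        rw [hy0, sub_zero, abs_of_nonneg (hφ0 x), mul_assoc, div_eq_mul_inv]
        refine mul_le_mul (hφM x) ?_ (by positivity) (by positivity)
        have h2 : (2 * ‖x - y‖) ^ (-((n : ℝ) + s)) ≤ (1 + ‖x - y‖) ^ (-((n : ℝ) + s)) :=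
          Real.rpow_le_rpow_of_nonpos (by positivity) (by linarith) (by linarith)
        rw [Real.mul_rpow (by norm_num) (by positivity)] at h2
        calc (‖x - y‖ ^ ((n : ℝ) + s))⁻¹
            = 2 ^ ((n : ℝ) + s) * (2 ^ (-((n : ℝ) + s)) * ‖x - y‖ ^ (-((n : ℝ) + s))) := by
              rw [← mul_assoc, ← Real.rpow_add (by norm_num), Real.rpow_neg (by positivity)]; simp
          _ ≤ _ := by gcongr
      · have hx0 : φ x = 0 := by
          by_contra h
          exact hx (by simpa using hsupp x x₀ h hx₀)
        simp [hx0, hy0]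
  have hconvm : Measurable fun x => ∫⁻ y, k (x - y) * f y := by
    have : Measurable (fun q : EuclideanSpace ℝ (Fin n) × EuclideanSpace ℝ (Fin n) =>
      k (q.1 - q.2) * f q.2) := by fun_prop
    exact this.lintegral_prod_right'
  set g : EuclideanSpace ℝ (Fin n) → ℝ≥0∞ := (closedBall x₀ d).indicator (fun _ => b * (C2 * S)) with hg
  have hgm : Measurable g := measurable_const.indicator measurableSet_closedBall
  have hpt2 : ∀ x, ‖∫ y, (φ x - φ y) * u y / ‖x - y‖ ^ ((n : ℝ) + s)‖ₑ ≤
      (∫⁻ y, k (x - y) * f y) + g x := by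
    intro x
    refine (enorm_integral_le_lintegral_enorm _).trans ((lintegral_mono (hpt x)).trans ?_)
    rw [lintegral_add_left (by fun_prop), lintegral_const_mul _ (by fun_prop)]
    gcongr
    by_cases hx : x ∈ closedBall x₀ d
    · rw [hg, Set.indicator_of_mem hx, Set.indicator_of_mem hx]
      gcongr
      exact hfar x p hp u hu
    · rw [Set.indicator_of_notMem hx]; simp
  have hr : 1 / p.toReal ≤ 1 := by
    by_cases hpt : p = ∞
    · simp [hpt]
    · have : 1 ≤ p.toReal := by simpa using (ENNReal.toReal_le_toReal (by simp) hpt).2 hp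
      rw [div_le_one (by linarith)]; exact this
  have hfin : eLpNorm (fun x => ∫ y, (φ x - φ y) * u y / ‖x - y‖ ^ ((n : ℝ) + s)) p volume ≤
      ENNReal.ofReal M * ENNReal.ofReal I * (N * S) + b * (C2 * S) * max 1 VD := by
    calc _ ≤ eLpNorm ((fun x => ∫⁻ y, k (x - y) * f y) + g) p volume :=
          eLpNorm_mono_enorm (fun x => by simpa using hpt2 x)
      _ ≤ eLpNorm (fun x => ∫⁻ y, k (x - y) * f y) p volume + eLpNorm g p volume :=
          eLpNorm_add_le hconvm.aestronglyMeasurable hgm.aestronglyMeasurable hp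
      _ ≤ _ := by
          refine add_le_add ?_ ?_
          · refine (aux_young k f hkm hfm p hp).trans ?_
            rw [hk, aux_kernel n s A B hApos hBpos hI]
            gcongr
            exact hN x₀ p hp u hu
          · refine (eLpNorm_indicator_const_le _ _).trans ?_
            rw [enorm_eq_self, Measure.addHaar_closedBall_center]
            gcongr
            exact aux_rpow_le_max _ _ (by positivity) hr
  calc _ ≤ ‖Cs‖ₑ * eLpNorm (fun x => ∫ y, (φ x - φ y) * u y / ‖x - y‖ ^ ((n : ℝ) + s)) p volume :=
        eLpNorm_const_smul_le (c := Cs)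
    _ ≤ ‖Cs‖ₑ * (ENNReal.ofReal M * ENNReal.ofReal I * (N * S) + b * (C2 * S) * max 1 VD) := by gcongr
    _ = _ := by
        rw [hb, mul_assoc M, ENNReal.ofReal_mul hM0.le]
        ring

lemma aux_reduce (n : ℕ) (s : ℝ) (φ : EuclideanSpace ℝ (Fin n) → ℝ) (hφ : Continuous φ)
    (p : ℝ≥0∞) (u : EuclideanSpace ℝ (Fin n) → ℝ) :
    ∃ v : EuclideanSpace ℝ (Fin n) → ℝ, Measurable v ∧
      (∀ x₀, eLpNorm v p (volume.restrict (ball x₀ 1)) ≤ eLpNorm u p (volume.restrict (ball x₀ 1))) ∧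
      ∀ x, ‖∫ y, (φ x - φ y) * u y / ‖x - y‖ ^ ((n : ℝ) + s)‖ ≤
        ‖∫ y, (φ x - φ y) * v y / ‖x - y‖ ^ ((n : ℝ) + s)‖ := by
  -- passing to a measurable representative
  have hmk : ∀ v : EuclideanSpace ℝ (Fin n) → ℝ, ∀ h : AEMeasurable v volume,
      (∀ x₀, eLpNorm (h.mk v) p (volume.restrict (ball x₀ 1)) = eLpNorm v p (volume.restrict (ball x₀ 1))) ∧
      ∀ x, ∫ y, (φ x - φ y) * h.mk v y / ‖x - y‖ ^ ((n : ℝ) + s) =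
        ∫ y, (φ x - φ y) * v y / ‖x - y‖ ^ ((n : ℝ) + s) := by
    intro v h
    refine ⟨fun x₀ => eLpNorm_congr_ae (ae_restrict_of_ae h.ae_eq_mk.symm), fun x => ?_⟩
    apply integral_congr_ae
    filter_upwards [h.ae_eq_mk] with y hy
    rw [hy]
  by_cases hu : AEMeasurable u volume
  · exact ⟨hu.mk u, hu.measurable_mk, fun x₀ => ((hmk u hu).1 x₀).le, fun x => by rw [(hmk u hu).2 x]⟩
  by_cases h0 : ∀ x, ∫ y, (φ x - φ y) * u y / ‖x - y‖ ^ ((n : ℝ) + s) = 0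
  · exact ⟨0, measurable_zero, fun x₀ => by simp, fun x => by simp [h0 x]⟩
  push Not at h0
  obtain ⟨x₁, hx₁⟩ := h0
  have hW : ∀ c : ℝ, MeasurableSet {y | φ y ≠ c} := fun c =>
    (isOpen_ne_fun hφ continuous_const).measurableSet
  have hae : ∀ x, ∫ y, (φ x - φ y) * u y / ‖x - y‖ ^ ((n : ℝ) + s) ≠ 0 →
      AEMeasurable ({y | φ y ≠ φ x}.indicator u) volume := by
    intro x hx
    have hgi : Integrable (fun y => (φ x - φ y) * u y / ‖x - y‖ ^ ((n : ℝ) + s)) volume := by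
      by_contra h
      exact hx (integral_undef h)
    have hφm := hφ.measurable
    have h1 : AEMeasurable (fun y => ((φ x - φ y) * u y / ‖x - y‖ ^ ((n : ℝ) + s)) *
        (‖x - y‖ ^ ((n : ℝ) + s) / (φ x - φ y))) volume :=
      hgi.aemeasurable.mul (Measurable.aemeasurable (by fun_prop))
    have h2 : {y | φ y ≠ φ x}.indicator u = {y | φ y ≠ φ x}.indicator
        (fun y => ((φ x - φ y) * u y / ‖x - y‖ ^ ((n : ℝ) + s)) *
        (‖x - y‖ ^ ((n : ℝ) + s) / (φ x - φ y))) := by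
      apply Set.indicator_congr
      intro y hy
      have hy' : φ y ≠ φ x := hy
      have hxy : x - y ≠ 0 := by
        intro h
        rw [sub_eq_zero] at h
        exact hy' (by rw [h])
      have h3 : 0 < ‖x - y‖ ^ ((n : ℝ) + s) := Real.rpow_pos_of_pos (norm_pos_iff.2 hxy) _
      have h4 : φ x - φ y ≠ 0 := sub_ne_zero.2 hy'.symm
      field_simp
    rw [h2]
    exact h1.indicator (hW _)
  have h1 := hae x₁ hx₁
  refine ⟨h1.mk _, h1.measurable_mk, fun x₀ => ?_, fun x => ?_⟩
  · rw [(hmk _ h1).1 x₀]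
    exact eLpNorm_mono (fun y => norm_indicator_le_norm_self _ _)
  · rw [(hmk _ h1).2 x]
    by_cases hx : φ x = φ x₁
    · apply le_of_eq
      congr 2
      ext y
      by_cases hy : φ y = φ x₁
      · simp [hx, hy]
      · rw [Set.indicator_of_mem (show y ∈ {y | φ y ≠ φ x₁} from hy)]
    · have : ∫ y, (φ x - φ y) * u y / ‖x - y‖ ^ ((n : ℝ) + s) = 0 := by
        by_contra hne
        have h2 := hae x hne
        apply hu
        have h3 : u = {y | φ y ≠ φ x₁}.indicator u +
            {y | φ y ≠ φ x₁}ᶜ.indicator ({y | φ y ≠ φ x}.indicator u) := by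
          ext y
          by_cases hy : φ y = φ x₁
          · have : φ x₁ ≠ φ x := fun h => hx h.symm
            simp [Set.indicator, hy, this]
          · simp [Set.indicator, hy]
        rw [h3]
        exact h1.add (h2.indicator (hW _).compl)
      rw [this]; simp

/-- global `L^p` bound for the commutator `[φ, Λˢ]u` for a nonnegative
compactly supported `C¹` cutoff `φ`, in terms of `M_φ = ‖φ‖_∞^{1-s}‖∇φ‖_∞^s` and
`‖u‖_{L^p_uloc}`. The commutator is given by its singular-integral representation. -/
theorem commutator_global_Lp (n : ℕ) (hn : 0 < n) (s : ℝ) (hs : s ∈ Set.Ioo (0 : ℝ) 1)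
    (Cs : ℝ) (hCs : 0 < Cs) (d : ℝ) (hd : 0 < d) :
    ∃ C > 0, ∀ φ : EuclideanSpace ℝ (Fin n) → ℝ,
      ContDiff ℝ 1 φ → (∀ x, 0 ≤ φ x) → HasCompactSupport φ →
      Metric.diam (tsupport φ) ≤ d →
      ∀ A B : ℝ, (∀ x, ‖fderiv ℝ φ x‖ ≤ A) → (∀ x, |φ x| ≤ B) →
      ∀ (p : ℝ≥0∞), 1 ≤ p → ∀ u : EuclideanSpace ℝ (Fin n) → ℝ,
        eLpNorm (fun x => Cs * ∫ y, (φ x - φ y) * u y / ‖x - y‖ ^ ((n : ℝ) + s)) p volume ≤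
          ENNReal.ofReal (C * (B ^ (1 - s) * A ^ s + 1)) *
            ⨆ x₀ : EuclideanSpace ℝ (Fin n), eLpNorm u p (volume.restrict (ball x₀ 1)) := by
  obtain ⟨C, hC, h⟩ := aux_meas n hn s hs Cs d hd
  refine ⟨C.toReal + 1, by positivity, ?_⟩
  intro φ hφ hφ0 hφc hφd A B hA hB p hp u
  obtain ⟨v, hv, hvu, hT⟩ := aux_reduce n s φ hφ.continuous p u
  have hA0 : 0 ≤ A := (norm_nonneg _).trans (hA 0)
  have hB0 : 0 ≤ B := (abs_nonneg _).trans (hB 0)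
  have hM0 : 0 ≤ B ^ (1 - s) * A ^ s := by positivity
  calc _ ≤ eLpNorm (fun x => Cs * ∫ y, (φ x - φ y) * v y / ‖x - y‖ ^ ((n : ℝ) + s)) p volume := by
        apply eLpNorm_mono
        intro x
        rw [norm_mul, norm_mul]
        gcongr
        exact hT x
    _ ≤ _ := h φ hφ hφ0 hφc hφd A B hA hB p hp v hv
    _ ≤ _ := by
        gcongr with x₀
        · rw [← ENNReal.ofReal_toReal hC, ← ENNReal.ofReal_mul ENNReal.toReal_nonneg,
            ENNReal.ofReal_toReal hC]
          apply ENNReal.ofReal_le_ofReal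
          have := ENNReal.toReal_nonneg (a := C)
          gcongr <;> linarith
        · exact hvu x₀
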